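/- Let G be a finite group, p a prime, and F an algebraically closed field of characteristic p. Suppose O_p(G) = 1, that p divides |G|, and that every proper section of G (every quotient K = H/N with H ≤ G, N normal in H, and |K| < |G|) has a normal Sylow p-subgroup. Then G has a simple FG-module of dimension at least p. -/

import Mathlib

/-- `pRadical p G` is `O_p(G)`, the largest normal `p`-subgroup of `G`. -/
def pRadical (p : ℕ) (G : Type*) [Group G] : Subgroup G :=
  ⨆ (N : Subgroup G) (_ : N.Normal) (_ : IsPGroup p N), N

/-!
Suppose every simple `FG`-module has dimension less than `p`, and let `x ^ p = 1`. Then `x - 1` is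
nilpotent, so `1 + x + ⋯ + x ^ (p - 1) = (x - 1) ^ (p - 1)` kills all simple modules: it lies in the
Jacobson radical, and `∑ i, g * x ^ i` is nilpotent for every `g`.

By a theorem of Brauer, `a ↦ a ^ p ^ n` is additive modulo the additive span of the commutators
`a * b - b * a`, and modulo these commutators `FG` is the space with basis the conjugacy classes.
Hence for large `n` each class contains a multiple of `p` of the `p` elements `(g * x ^ i) ^ p ^ n`,
so all of them are conjugate; in particular `(g * x) ^ p ^ n` is conjugate to `g ^ p ^ n`. Starting
from `g = 1`, every product of elements of order dividing `p` has `p`-power order, so these elements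
generate a normal `p`-subgroup, which is nontrivial when `p` divides the order of `G`.
-/

section Brauer

open Equiv Equiv.Perm Finset

theorem prime_dvd_card_of_perm_pow_prime_pow {α : Type*} {p n : ℕ} [Fact p.Prime] {σ : Perm α}
    (hσ : σ ^ p ^ n = 1) {s : Finset α} (hs : ∀ x, σ x ∈ s ↔ x ∈ s) (hmoved : ∀ x ∈ s, σ x ≠ x) :
    p ∣ #s := by
  classical
  have hpow : σ.subtypePerm hs ^ p ^ n = 1 := by
    ext
    simp [hσ]
  have hsupp : (σ.subtypePerm hs).support = univ := by
    ext x
    simpa [Subtype.ext_iff] using hmoved x x.2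
  have hcard := card_compl_support_modEq hpow
  rw [hsupp, compl_univ, card_empty, Fintype.card_coe] at hcard
  exact Nat.modEq_zero_iff_dvd.mp hcard.symm

theorem sum_eq_sum_fixed_of_perm_pow_prime_pow {α M : Type*} [Fintype α] [DecidableEq α]
    [AddCommMonoid M] {p n : ℕ} [Fact p.Prime] (hM : ∀ m : M, p • m = 0) {σ : Perm α}
    (hσ : σ ^ p ^ n = 1) {f : α → M} (hf : ∀ x, f (σ x) = f x) :
    ∑ x, f x = ∑ x with σ x = x, f x := by
  classical
  have hmoved : ∑ x with σ x ≠ x, f x = 0 := by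
    rw [sum_comp (fun m => m) f]
    refine sum_eq_zero fun m _ => ?_
    obtain ⟨k, hk⟩ : p ∣ #{x ∈ {x | σ x ≠ x} | f x = m} :=
      prime_dvd_card_of_perm_pow_prime_pow hσ (by simp [hf]) fun x hx => by
        simpa using (mem_filter.mp (mem_filter.mp hx).1).2
    rw [hk, mul_nsmul', hM]
  rw [← sum_filter_add_sum_filter_not univ (fun x => σ x = x), hmoved, add_zero]

theorem finRotate_pow_self (N : ℕ) : finRotate N ^ N = 1 := by
  ext i : 1
  have : NeZero N := i.neZero
  have hpow (k : ℕ) : (finRotate N ^ k) i = i + k • 1 := by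
    induction k with
    | zero => simp
    | succ k ih => rw [pow_succ', Perm.mul_apply, ih, finRotate_apply, succ_nsmul, add_assoc]
  have hN : N • (1 : Fin N) = 0 := by simpa using card_nsmul_eq_zero (x := (1 : Fin N))
  rw [hpow, hN, add_zero, Perm.one_apply]

/-- The cyclic rotation `w₀ w₁ ⋯ ↦ w₁ ⋯ w₀` of the words of length `N` over the alphabet `ι`, which
organises the noncommutative expansion of `(∑ i, a i) ^ N`. Words are functions on `Fin N`. -/
def wordRotation (N : ℕ) (ι : Type*) : Perm (Fin N → ι) :=
  MulAction.toPerm (DomMulAct.mk (finRotate N))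

theorem wordRotation_apply {N : ℕ} {ι : Type*} (w : Fin N → ι) :
    wordRotation N ι w = w ∘ finRotate N := rfl

theorem wordRotation_pow_self (N : ℕ) (ι : Type*) : wordRotation N ι ^ N = 1 := by
  change MulAction.toPermHom _ _ _ ^ N = 1
  rw [← map_pow, ← DomMulAct.mk_pow, finRotate_pow_self, DomMulAct.mk_one, map_one]

theorem wordRotation_eq_self_iff {N : ℕ} [NeZero N] {ι : Type*} {w : Fin N → ι} :
    wordRotation N ι w = w ↔ ∃ i, Function.const (Fin N) i = w := by
  obtain ⟨N, rfl⟩ := Nat.exists_eq_add_one_of_ne_zero (NeZero.ne N)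
  constructor
  · intro hw
    refine ⟨w 0, funext fun j => ?_⟩
    induction j using Fin.induction with
    | zero => rfl
    | succ j ih =>
      calc w 0 = wordRotation (N + 1) ι w j.castSucc := by rw [hw]; exact ih
        _ = w j.succ := by simp [wordRotation_apply]
  · rintro ⟨i, rfl⟩
    rfl

theorem map_prod_ofFn_comp_finRotate {R M : Type*} [Monoid R] {τ : R → M}
    (hτ : ∀ a b, τ (a * b) = τ (b * a)) {N : ℕ} (w : Fin N → R) :
    τ (List.ofFn (w ∘ finRotate N)).prod = τ (List.ofFn w).prod := by
  obtain _ | N := N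
  · rfl
  · rw [List.ofFn_succ' (w ∘ _), List.ofFn_succ (f := w)]
    simp [hτ (w 0)]

theorem sum_pow_eq_sum_prod_ofFn {R ι : Type*} [Semiring R] [Fintype ι] (a : ι → R) (N : ℕ) :
    (∑ i, a i) ^ N = ∑ w : Fin N → ι, (List.ofFn (a ∘ w)).prod := by
  simpa [Function.comp_def] using
    (MultilinearMap.mkPiAlgebraFin ℕ N R).map_sum (fun _ => a)

theorem map_sum_pow_prime_pow {R M ι : Type*} [Semiring R] [AddCommMonoid M] [Fintype ι]
    {p : ℕ} [Fact p.Prime] (hM : ∀ m : M, p • m = 0) {τ : R →+ M}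
    (hτ : ∀ a b, τ (a * b) = τ (b * a)) (a : ι → R) (n : ℕ) :
    τ ((∑ i, a i) ^ p ^ n) = ∑ i, τ (a i ^ p ^ n) := by
  classical
  have hrot (w : Fin (p ^ n) → ι) :
      τ (List.ofFn (a ∘ wordRotation (p ^ n) ι w)).prod = τ (List.ofFn (a ∘ w)).prod :=
    map_prod_ofFn_comp_finRotate hτ (a ∘ w)
  have hfixed : ({w | wordRotation (p ^ n) ι w = w} : Finset (Fin (p ^ n) → ι)) =
      univ.image (Function.const (Fin (p ^ n))) := by
    ext w
    simp [wordRotation_eq_self_iff]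
  rw [sum_pow_eq_sum_prod_ofFn, map_sum,
    sum_eq_sum_fixed_of_perm_pow_prime_pow hM (wordRotation_pow_self _ ι) hrot, hfixed,
    sum_image Function.const_injective.injOn]
  simp [Function.comp_def]

end Brauer

section ConjTrace

open Finset MonoidAlgebra

/-- The universal trace of the group algebra `RG`: it sends `∑ g, r g • g` to the formal combination
`∑ g, r g • [g]` of conjugacy classes. -/
noncomputable def conjTrace (R G : Type*) [Semiring R] [Group G] :
    MonoidAlgebra R G →+ (ConjClasses G →₀ R) :=
  (Finsupp.mapDomain.addMonoidHom ConjClasses.mk).comp coeffAddEquiv.toAddMonoidHom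

theorem conjTrace_single {R G : Type*} [Semiring R] [Group G] (g : G) (r : R) :
    conjTrace R G (single g r) = Finsupp.single (ConjClasses.mk g) r :=
  Finsupp.mapDomain_single

theorem conjTrace_of {R G : Type*} [Semiring R] [Group G] (g : G) :
    conjTrace R G (of R G g) = Finsupp.single (ConjClasses.mk g) 1 :=
  conjTrace_single g 1

variable {R G : Type*} [CommSemiring R] [Group G]

theorem conjTrace_mul_comm (a b : MonoidAlgebra R G) :
    conjTrace R G (a * b) = conjTrace R G (b * a) := by
  induction a using MonoidAlgebra.induction_linear with
  | zero => simp
  | add a a' ha ha' => simp only [add_mul, mul_add, map_add, ha, ha']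
  | single g r =>
    induction b using MonoidAlgebra.induction_linear with
    | zero => simp
    | add b b' hb hb' => simp only [add_mul, mul_add, map_add, hb, hb']
    | single h s =>
      have hconj : IsConj (g * h) (h * g) := isConj_iff.mpr ⟨h, by group⟩
      simp only [single_mul_single, conjTrace_single,
        ConjClasses.mk_eq_mk_iff_isConj.mpr hconj, mul_comm]

variable {p n : ℕ} [hp : Fact p.Prime] [CharP R p]

open Classical in
theorem prime_dvd_card_isConj_of_sum_of_pow_eq_zero {ι : Type*} [Fintype ι] {h : ι → G}
    (hzero : (∑ i, of R G (h i)) ^ p ^ n = 0) (c : G) :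
    p ∣ #{i | IsConj (h i ^ p ^ n) c} := by
  have hchar (m : ConjClasses G →₀ R) : p • m = 0 := by
    ext
    simp
  have htrace := map_sum_pow_prime_pow hchar conjTrace_mul_comm (fun i => of R G (h i)) n
  simp only [hzero, map_zero, ← map_pow, conjTrace_of] at htrace
  have hcoeff := congr($htrace (ConjClasses.mk c))
  simp only [Finsupp.coe_zero, Pi.zero_apply, Finsupp.finsetSum_apply, Finsupp.single_apply,
    ConjClasses.mk_eq_mk_iff_isConj, sum_boole] at hcoeff
  exact (CharP.cast_eq_zero_iff R p _).mp hcoeff.symm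

theorem isConj_mul_pow_of_of_mul_geom_sum_pow_eq_zero {g x : G}
    (hzero : (of R G g * ∑ i ∈ range p, of R G x ^ i) ^ p ^ n = 0) :
    IsConj ((g * x) ^ p ^ n) (g ^ p ^ n) := by
  classical
  have hexpand : of R G g * ∑ i ∈ range p, of R G x ^ i =
      ∑ i : Fin p, of R G (g * x ^ (i : ℕ)) := by
    simp only [mul_sum, ← map_pow, ← map_mul, sum_range]
  rw [hexpand] at hzero
  let s : Finset (Fin p) := {i | IsConj ((g * x ^ (i : ℕ)) ^ p ^ n) (g ^ p ^ n)}
  have hdvd : p ∣ #s := prime_dvd_card_isConj_of_sum_of_pow_eq_zero hzero _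
  have hpos : 0 < #s :=
    card_pos.mpr ⟨⟨0, hp.out.pos⟩, mem_filter.mpr ⟨mem_univ _, by rw [pow_zero, mul_one]⟩⟩
  have hall : s = univ :=
    eq_univ_of_card s <| (card_le_univ s).antisymm <|
      (Fintype.card_fin p).trans_le (Nat.le_of_dvd hpos hdvd)
  have hone : ⟨1, hp.out.one_lt⟩ ∈ s := hall ▸ mem_univ _
  simpa only [pow_one] using (mem_filter.mp hone).2

end ConjTrace

section Radical

open Polynomial in
theorem geom_sum_eq_sub_one_pow_of_charP (R : Type*) {A : Type*} [CommRing R] [Ring A]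
    [Algebra R A] {p : ℕ} [Fact p.Prime] [CharP R p] (x : A) :
    ∑ i ∈ Finset.range p, x ^ i = (x - 1) ^ (p - 1) := by
  have h : ∑ i ∈ Finset.range p, (X : R[X]) ^ i = (X - 1) ^ (p - 1) := by
    rw [← cyclotomic_prime, ← cyclotomic_one,
      ← cyclotomic_mul_prime_eq_pow_of_not_dvd R (Nat.Prime.not_dvd_one Fact.out), one_mul]
  simpa using congr(aeval x $h)

theorem end_pow_eq_zero_of_finrank_le {R V : Type*} [CommRing R] [IsDomain R] [AddCommGroup V]
    [Module R V] [Module.Finite R V] [Module.Free R V] {f : Module.End R V} (hf : IsNilpotent f)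
    {m : ℕ} (hm : Module.finrank R V ≤ m) : f ^ m = 0 := by
  have h := f.aeval_self_charpoly
  rw [hf.charpoly_eq_X_pow_finrank, map_pow, Polynomial.aeval_X] at h
  exact pow_eq_zero_of_le hm h

theorem pow_mem_jacobson_of_finrank_le {F A : Type*} [Field F] [Ring A] [Algebra F A]
    [Module.Finite F A] {a : A} (ha : IsNilpotent a) {m : ℕ}
    (hm : ∀ I : Ideal A, I.IsMaximal → Module.finrank F (A ⧸ I) ≤ m) :
    a ^ m ∈ Ring.jacobson A := by
  rw [Ring.jacobson_eq_sInf_isMaximal, Ideal.mem_sInf]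
  intro I hI
  have : Module.Finite F (A ⧸ I) := Module.Finite.trans A _
  have hzero : Algebra.lsmul F F (A ⧸ I) (a ^ m) = 0 := by
    rw [map_pow]
    exact end_pow_eq_zero_of_finrank_le (ha.map _) (hm I hI)
  rw [← Submodule.Quotient.mk_eq_zero, ← mul_one (a ^ m)]
  exact LinearMap.congr_fun hzero (Submodule.Quotient.mk 1)

theorem finrank_restrictScalars (R A V : Type*) [CommSemiring R] [Semiring A] [Algebra R A]
    [AddCommMonoid V] [Module R V] [Module A V] [IsScalarTower R A V] :
    Module.finrank R (RestrictScalars R A V) = Module.finrank R V :=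
  LinearEquiv.finrank_eq
    { RestrictScalars.addEquiv R A V with
      map_smul' := fun r v => algebraMap_smul A r (RestrictScalars.addEquiv R A V v) }

end Radical

section PRadical

theorem le_pRadical {p : ℕ} {G : Type*} [Group G] {N : Subgroup G} (hN : N.Normal)
    (hp : IsPGroup p N) : N ≤ pRadical p G :=
  le_iSup_of_le N <| le_iSup_of_le hN <| le_iSup_of_le hp le_rfl

theorem isPGroup_closure_of_isConj {G : Type*} [Group G] {p n : ℕ} {S : Set G}
    (hS : ∀ g, ∀ s ∈ S, IsConj ((g * s) ^ p ^ n) (g ^ p ^ n)) :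
    IsPGroup p (Subgroup.closure S) := by
  have hpow (g : G) (hg : g ∈ Subgroup.closure S) : g ^ p ^ n = 1 := by
    induction hg using Subgroup.closure_induction_right with
    | one => exact one_pow _
    | mul_right g _ s hs ih => exact isConj_one_left.mp (ih ▸ hS g s hs)
    | mul_inv_cancel g _ s hs ih =>
      have hconj := hS (g * s⁻¹) s hs
      rw [inv_mul_cancel_right, ih] at hconj
      exact isConj_one_right.mp hconj
  exact fun g => ⟨n, Subtype.ext (hpow g g.2)⟩

open MonoidAlgebra

variable {F G : Type*} [Field F] [Group G] [Finite G] {p : ℕ} [hp : Fact p.Prime] [CharP F p]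

theorem geom_sum_of_mem_jacobson_of_finrank_lt
    (hdim : ∀ I : Ideal (MonoidAlgebra F G), I.IsMaximal →
      Module.finrank F (MonoidAlgebra F G ⧸ I) < p) {x : G} (hx : x ^ p = 1) :
    ∑ i ∈ Finset.range p, of F G x ^ i ∈ Ring.jacobson (MonoidAlgebra F G) := by
  have : CharP (MonoidAlgebra F G) p := charP_of_injective_algebraMap (algebraMap F _).injective p
  have hnil : IsNilpotent (of F G x - 1) :=
    ⟨p, by rw [sub_pow_char_of_commute p (Commute.one_right _), ← map_pow, hx, map_one, one_pow,
      sub_self]⟩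
  rw [geom_sum_eq_sub_one_pow_of_charP F]
  exact pow_mem_jacobson_of_finrank_le hnil fun I hI => Nat.le_sub_one_of_lt (hdim I hI)

theorem mem_pRadical_of_finrank_lt
    (hdim : ∀ I : Ideal (MonoidAlgebra F G), I.IsMaximal →
      Module.finrank F (MonoidAlgebra F G ⧸ I) < p) {x : G} (hx : x ^ p = 1) :
    x ∈ pRadical p G := by
  have : IsArtinianRing (MonoidAlgebra F G) := .of_finite F _
  obtain ⟨n, hn⟩ := IsSemiprimaryRing.isNilpotent (R := MonoidAlgebra F G)
  have hconj (g y : G) (hy : y ^ p = 1) : IsConj ((g * y) ^ p ^ n) (g ^ p ^ n) := by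
    have hmem := Ideal.pow_mem_pow (Ideal.mul_mem_left _ (of F G g)
      (geom_sum_of_mem_jacobson_of_finrank_lt hdim hy)) n
    rw [hn] at hmem
    exact isConj_mul_pow_of_of_mul_geom_sum_pow_eq_zero
      (pow_eq_zero_of_le (Nat.lt_pow_self hp.out.one_lt).le hmem)
  have hgroup : IsPGroup p (Subgroup.normalClosure {y : G | y ^ p = 1}) := by
    refine isPGroup_closure_of_isConj fun g y hy => hconj g y ?_
    obtain ⟨z, hz, hzy⟩ := Group.mem_conjugatesOfSet_iff.mp hy
    exact isConj_one_right.mp (hz ▸ hzy.pow p)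
  exact le_pRadical Subgroup.normalClosure_normal hgroup (Subgroup.subset_normalClosure hx)

end PRadical

universe u v

theorem exists_simple_module_of_dim_ge_p_general (p : ℕ) (hp : p.Prime)
    (F : Type u) [Field F] [CharP F p] (G : Type v) [Group G] [Finite G]
    (hO : pRadical p G = ⊥) (hdvd : p ∣ Nat.card G) :
    ∃ S : ModuleCat.{max u v} (MonoidAlgebra F G), IsSimpleModule (MonoidAlgebra F G) S ∧
      p ≤ Module.finrank F (RestrictScalars F (MonoidAlgebra F G) S) := by
  have : Fact p.Prime := ⟨hp⟩
  obtain ⟨x, hx⟩ := exists_prime_orderOf_dvd_card' p hdvd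
  have hxO : x ∉ pRadical p G := by
    rw [hO, Subgroup.mem_bot, ← orderOf_eq_one_iff, hx]
    exact hp.ne_one
  obtain ⟨I, hI, hdim⟩ : ∃ I : Ideal (MonoidAlgebra F G), I.IsMaximal ∧
      p ≤ Module.finrank F (MonoidAlgebra F G ⧸ I) := by
    by_contra! hsmall
    exact hxO (mem_pRadical_of_finrank_lt hsmall (hx ▸ pow_orderOf_eq_one x))
  exact ⟨.of _ (MonoidAlgebra F G ⧸ I), isSimpleModule_iff_isCoatom.mpr hI.out,
    hdim.trans_eq (finrank_restrictScalars F _ _).symm⟩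

/-- Let `G` be a finite group, `p` a prime, and `F` an algebraically
closed field of characteristic `p`.  Suppose `O_p(G) = 1`, that `p` divides `|G|`, and
that every proper section `H/N` of `G` (with `H ≤ G`, `N ⊴ H` and `|H/N| < |G|`) has a
normal Sylow `p`-subgroup.  Then `G` has a simple `FG`-module of dimension at least `p`. -/
theorem exists_simple_module_of_dim_ge_p
    (p : ℕ) (hp : p.Prime)
    (F : Type) [Field F] [IsAlgClosed F] [CharP F p]
    (G : Type) [Group G] [Fintype G]
    (hO : pRadical p G = ⊥) (hdvd : p ∣ Fintype.card G)
    (hsection : ∀ (H : Subgroup G) (N : Subgroup H) [N.Normal],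
      Nat.card (H ⧸ N) < Nat.card G →
        ∃ Q : Sylow p (H ⧸ N), (Q : Subgroup (H ⧸ N)).Normal) :
    ∃ S : ModuleCat.{0} (MonoidAlgebra F G), IsSimpleModule (MonoidAlgebra F G) S ∧
      p ≤ Module.finrank F (RestrictScalars F (MonoidAlgebra F G) S) := by
  exact exists_simple_module_of_dim_ge_p_general p hp F G hO (by rwa [Nat.card_eq_fintype_card])
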